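/- Extension Lemma (extendibility criterion): Let n ≥ 1 and let φ be an order automorphism of D_n. Then there exists an order automorphism ψ of D_{n+1} whose restriction to D_n equals φ if and only if φ(H_{n+1}) = H_{n+1}, where φ acts on H_{n+1} by φ(S, k) = ({φ(H) : H ∈ S}, k) applied element-wise. -/

import Mathlib

/-- A finite digraph: a finite nonempty vertex set `Fin n` with a (Bool-valued)
edge relation, loops allowed. -/
structure FinDigraph where
  n : ℕ
  pos : 0 < n
  adj : Fin n → Fin n → Bool

namespace FinDigraph

/-- Isomorphism of finite digraphs. -/
def Iso (G H : FinDigraph) : Prop :=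
  ∃ e : Fin G.n ≃ Fin H.n, ∀ u v, H.adj (e u) (e v) = G.adj u v

theorem iso_refl (G : FinDigraph) : Iso G G := ⟨Equiv.refl _, fun _ _ => rfl⟩

theorem iso_symm {G H : FinDigraph} (h : Iso G H) : Iso H G := by
  obtain ⟨e, he⟩ := h
  refine ⟨e.symm, fun u v => ?_⟩
  rw [← he (e.symm u) (e.symm v), e.apply_symm_apply, e.apply_symm_apply]

theorem iso_trans {G H K : FinDigraph} (hGH : Iso G H) (hHK : Iso H K) : Iso G K := by
  obtain ⟨e, he⟩ := hGH
  obtain ⟨f, hf⟩ := hHK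
  exact ⟨e.trans f, fun u v => (hf (e u) (e v)).trans (he u v)⟩

instance isoSetoid : Setoid FinDigraph :=
  ⟨Iso, iso_refl, fun h => iso_symm h, fun h h' => iso_trans h h'⟩

/-- `Emb G H` : `G` is isomorphic to an induced subdigraph of `H`. -/
def Emb (G H : FinDigraph) : Prop :=
  ∃ f : Fin G.n ↪ Fin H.n, ∀ u v, H.adj (f u) (f v) = G.adj u v

end FinDigraph

/-- `D`: the isomorphism classes of finite digraphs. -/
def D : Type := Quotient FinDigraph.isoSetoid

/-- The isomorphism class of a finite digraph. -/
def toD (G : FinDigraph) : D := Quotient.mk _ G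

/-- The substructure (induced subdigraph) ordering `⊑` on `D`. -/
instance : LE D :=
  ⟨fun x y => ∃ G H : FinDigraph, x = toD G ∧ y = toD H ∧ FinDigraph.Emb G H⟩

/-- An order automorphism: a bijection such that `x ≤ y ↔ f x ≤ f y`. -/
def IsOrderAuto {α : Type*} [LE α] (f : α → α) : Prop :=
  Function.Bijective f ∧ ∀ x y : α, x ≤ y ↔ f x ≤ f y

/-- φ₁ on digraphs: complement the loop status of every vertex. -/
def phi1Fn (G : FinDigraph) : FinDigraph :=
  ⟨G.n, G.pos, fun u v => if u = v then !(G.adj u v) else G.adj u v⟩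

/-- Edge reversal: transpose the edge relation. -/
def revFn (G : FinDigraph) : FinDigraph :=
  ⟨G.n, G.pos, fun u v => G.adj v u⟩

/-- φ₂ on digraphs: toggle both edges between distinct loopless vertices joined
by both or neither of the two possible edges. -/
def phi2Fn (G : FinDigraph) : FinDigraph :=
  ⟨G.n, G.pos, fun u v =>
    if u ≠ v ∧ G.adj u u = false ∧ G.adj v v = false ∧ G.adj u v = G.adj v u then
      !(G.adj u v)
    else G.adj u v⟩

/-- φ₃ on digraphs: toggle both edges between distinct looped vertices joined
by both or neither of the two possible edges. -/
def phi3Fn (G : FinDigraph) : FinDigraph :=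
  ⟨G.n, G.pos, fun u v =>
    if u ≠ v ∧ G.adj u u = true ∧ G.adj v v = true ∧ G.adj u v = G.adj v u then
      !(G.adj u v)
    else G.adj u v⟩

/-- φ₄ on digraphs: reverse the single edge between distinct loopless vertices
joined by exactly one of the two possible edges. -/
def phi4Fn (G : FinDigraph) : FinDigraph :=
  ⟨G.n, G.pos, fun u v =>
    if u ≠ v ∧ G.adj u u = false ∧ G.adj v v = false ∧ G.adj u v ≠ G.adj v u then
      G.adj v u
    else G.adj u v⟩

/-- φ₅ on digraphs: reverse the single edge between distinct looped vertices
joined by exactly one of the two possible edges. -/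
def phi5Fn (G : FinDigraph) : FinDigraph :=
  ⟨G.n, G.pos, fun u v =>
    if u ≠ v ∧ G.adj u u = true ∧ G.adj v v = true ∧ G.adj u v ≠ G.adj v u then
      G.adj v u
    else G.adj u v⟩

/-- φ_π on digraphs: for each ordered pair `(u,v)` of distinct vertices with a loop at
`u` and no loop at `v`, replace its type `(Adj(u,v), Adj(v,u)) : Bool × Bool` by `π`
applied to it; everything else is unchanged. -/
def phiPiFn (π : Equiv.Perm (Bool × Bool)) (G : FinDigraph) : FinDigraph :=
  ⟨G.n, G.pos, fun u v =>
    if u = v then G.adj u v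
    else if G.adj u u = true ∧ G.adj v v = false then (π (G.adj u v, G.adj v u)).1
    else if G.adj u u = false ∧ G.adj v v = true then (π (G.adj v u, G.adj u v)).2
    else G.adj u v⟩

/-- The number of vertices of an isomorphism class. -/
def nVerts : D → ℕ :=
  Quotient.lift (fun G : FinDigraph => G.n) (fun _ _ h => by
    obtain ⟨e, -⟩ := h
    simpa using Fintype.card_congr e)

/-- `Dn n`: the classes of digraphs with at most `n` vertices (first `n` levels). -/
def Dn (n : ℕ) : Set D := {x : D | nVerts x ≤ n}

theorem mem_Dn_succ {n : ℕ} {x : D} (h : x ∈ Dn n) : x ∈ Dn (n + 1) :=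
  le_trans h (Nat.le_succ n)

/-- The set of lower covers of `x` in `(D, ⊑)`. -/
def lcov (x : D) : Set D :=
  {y : D | y ≤ x ∧ y ≠ x ∧ ∀ z : D, y ≤ z → z ≤ x → z = y ∨ z = x}

/-- `scount x` = number of classes sharing the lower-cover set of `x`. -/
noncomputable def scount (x : D) : ℕ := Nat.card {y : D // lcov y = lcov x}

/-- `Hset m` = `{(l(G), s(G)) : G ∈ D with exactly m vertices}`. -/
def Hset (m : ℕ) : Set (Set D × ℕ) :=
  {p : Set D × ℕ | ∃ x : D, nVerts x = m ∧ p = (lcov x, scount x)}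

/-- Element-wise action of a map of `Dn n` on a subset of `Dn n`. -/
def setImage {n : ℕ} (φ : ↥(Dn n) → ↥(Dn n)) (S : Set D) : Set D :=
  {z : D | ∃ (y : D) (h : y ∈ Dn n), y ∈ S ∧ z = ↑(φ ⟨y, h⟩)}

/-- Element-wise action of a map of `Dn n` on a set of pairs `(S, k)`. -/
def HsetImage {n : ℕ} (φ : ↥(Dn n) → ↥(Dn n)) (A : Set (Set D × ℕ)) : Set (Set D × ℕ) :=
  {p : Set D × ℕ | ∃ q ∈ A, p = (setImage φ q.1, q.2)}

/-- The swap permutation `σ(a,b) = (b,a)` of `Bool × Bool`. -/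
def sigmaSwap : Equiv.Perm (Bool × Bool) := Equiv.prodComm Bool Bool

/-- Restrictions to `D₃` of order automorphisms of `(D, ⊑)`. -/
def Aut3D : Set (↥(Dn 3) → ↥(Dn 3)) :=
  {g | ∃ φ : D → D, IsOrderAuto φ ∧ ∀ x : ↥(Dn 3), (↑(g x) : D) = φ ↑x}

/-- Restrictions to `D₃` of order automorphisms of `D₄`. -/
def Aut3D4 : Set (↥(Dn 3) → ↥(Dn 3)) :=
  {g | ∃ ψ : ↥(Dn 4) → ↥(Dn 4), IsOrderAuto ψ ∧
    ∀ x : ↥(Dn 3), (↑(g x) : D) = ↑(ψ ⟨↑x, mem_Dn_succ x.2⟩)}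

/-- Restrictions to `D₃` of order automorphisms of `D₄`, as order isomorphisms of `D₃`. -/
def Aut3D4Iso : Set (↥(Dn 3) ≃o ↥(Dn 3)) :=
  {g | ∃ ψ : ↥(Dn 4) → ↥(Dn 4), IsOrderAuto ψ ∧
    ∀ x : ↥(Dn 3), ((g x : ↥(Dn 3)) : D) = ↑(ψ ⟨↑x, mem_Dn_succ x.2⟩)}

/-! Let `s = D_n` and `t = D_{n+1}`. Everything strictly below an element of `t` lies in `s`, so
the order of `t` is determined by the order of `s` together with the lower covers in `s` of the
elements of `t \ s`. Hence `φ` extends to `t` iff some permutation `e` of the finite set `t \ s`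
satisfies `l(e y) = φ(l(y))` for all `y`. Such an `e` exists iff, for every `S`, as many `y` satisfy
`φ(l(y)) = S` as satisfy `l(y) = S`; the pairs in `H_{n+1}` record exactly these fiber sizes,
because digraphs with the same lower covers have the same number of vertices. -/

section FiberProfile

variable {α β γ δ : Type*}

/-- The nonempty fibers of `f`, recorded as pairs (value, number of preimages). This is the shape of
`H_{n+1}`, with `f` the map taking a digraph to its set of lower covers. -/
def fiberProfile (f : α → γ) : Set (γ × ℕ) :=
  Set.range fun a => (f a, Nat.card {b // f b = f a})

theorem mem_fiberProfile_iff [Finite α] {f : α → γ} {c : γ} {k : ℕ} :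
    (c, k) ∈ fiberProfile f ↔ k ≠ 0 ∧ Nat.card {a // f a = c} = k := by
  constructor
  · rintro ⟨a, ha⟩
    obtain ⟨rfl, rfl⟩ := Prod.mk.inj ha
    have : Nonempty {b // f b = f a} := ⟨⟨a, rfl⟩⟩
    exact ⟨Nat.card_pos.ne', rfl⟩
  · rintro ⟨hk, rfl⟩
    obtain ⟨⟨a, rfl⟩⟩ := (Nat.card_ne_zero.1 hk).1
    exact ⟨a, rfl⟩

theorem fiberProfile_eq_iff [Finite α] [Finite β] {f : α → γ} {g : β → γ} :
    fiberProfile f = fiberProfile g ↔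
      ∀ c, Nat.card {a // f a = c} = Nat.card {b // g b = c} := by
  simp only [Set.ext_iff, Prod.forall, mem_fiberProfile_iff]
  refine forall_congr' fun c => ⟨fun h => ?_, fun h k => by rw [h]⟩
  have hf := h (Nat.card {a // f a = c})
  have hg := h (Nat.card {b // g b = c})
  grind

theorem exists_equiv_comp_eq_iff [Finite α] [Finite β] {f : α → γ} {g : β → γ} :
    (∃ e : α ≃ β, ∀ a, g (e a) = f a) ↔ fiberProfile f = fiberProfile g := by
  rw [fiberProfile_eq_iff]
  constructor
  · rintro ⟨e, he⟩ c
    exact Nat.card_congr (e.subtypeEquiv fun a => by rw [he])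
  · intro h
    exact ⟨Equiv.ofFiberEquiv fun c => (Finite.card_eq.1 (h c)).some, Equiv.ofFiberEquiv_map _⟩

theorem fiberProfile_comp {f : α → γ} {h : γ → δ} (hh : Set.InjOn h (Set.range f)) :
    fiberProfile (h ∘ f) = Prod.map h id '' fiberProfile f := by
  have hfib (a b : α) : h (f b) = h (f a) ↔ f b = f a := hh.eq_iff ⟨b, rfl⟩ ⟨a, rfl⟩
  simp only [fiberProfile, ← Set.range_comp, Function.comp_def, hfib, Prod.map_apply, id]

end FiberProfile

theorem isOrderAuto_iff_exists_orderIso {α : Type*} [LE α] {f : α → α} :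
    IsOrderAuto f ↔ ∃ e : α ≃o α, ⇑e = f := by
  constructor
  · rintro ⟨hbij, hle⟩
    exact ⟨⟨Equiv.ofBijective f hbij, (hle _ _).symm⟩, rfl⟩
  · rintro ⟨e, rfl⟩
    exact ⟨e.bijective, fun _ _ => e.le_iff_le.symm⟩

section OrderExtension

variable {α : Type*} {s t : Set α}

theorem exists_perm_sdiff_covBy_iff [Preorder α] (hst : s ⊆ t) (ht : t.OrdConnected)
    {φ : s → s} (hφ : Function.Surjective φ) (ψ : t ≃o t)
    (hψ : ∀ x : s, (ψ (Set.inclusion hst x) : α) = φ x) :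
    ∃ e : Equiv.Perm ↥(t \ s), ∀ (y : ↥(t \ s)) (x : s), (φ x : α) ⋖ e y ↔ (x : α) ⋖ y := by
  have hmem (y : t) : (ψ y : α) ∈ s ↔ (y : α) ∈ s := by
    constructor
    · intro hy
      obtain ⟨x, hx⟩ := hφ ⟨ψ y, hy⟩
      have : ψ (Set.inclusion hst x) = ψ y := Subtype.ext ((hψ x).trans (congrArg Subtype.val hx))
      exact ψ.injective this ▸ x.2
    · intro hy
      exact (hψ ⟨y, hy⟩).symm ▸ (φ ⟨y, hy⟩).2
  have hcov (x y : t) : (ψ x : α) ⋖ ψ y ↔ (x : α) ⋖ y := by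
    have hcoe (a b : t) : (a : α) ⋖ b ↔ a ⋖ b :=
      Set.OrdConnected.apply_covBy_apply_iff (OrderEmbedding.subtype (· ∈ t))
        (by simpa using ht)
    rw [hcoe, hcoe, apply_covBy_apply_iff]
  refine ⟨⟨fun y => ⟨ψ ⟨y, y.2.1⟩, (ψ _).2, mt (hmem _).1 y.2.2⟩,
    fun y => ⟨ψ.symm ⟨y, y.2.1⟩, (ψ.symm _).2, mt (hmem _).2 (by simpa using y.2.2)⟩,
    fun y => by simp, fun y => by simp⟩, fun y x => ?_⟩
  rw [← hψ]
  exact hcov _ _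

variable [PartialOrder α] [IsStronglyCoatomic α]

theorem coe_le_coe_iff_exists_covBy (hlt : ∀ ⦃x y⦄, x < y → y ∈ t → x ∈ s)
    (x : s) (y : ↥(t \ s)) :
    (x : α) ≤ y ↔ ∃ z : s, x ≤ z ∧ (z : α) ⋖ y := by
  constructor
  · intro hxy
    have hne : (x : α) ≠ y := fun h => y.2.2 (h ▸ x.2)
    obtain ⟨z, hxz, hzy⟩ := exists_le_covBy_of_lt (hxy.lt_of_ne hne)
    exact ⟨⟨z, hlt hzy.lt y.2.1⟩, hxz, hzy⟩
  · rintro ⟨z, hxz, hzy⟩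
    exact (Subtype.coe_le_coe.2 hxz).trans hzy.le

theorem exists_orderIso_extension_of_covBy_iff (hst : s ⊆ t)
    (hlt : ∀ ⦃x y⦄, x < y → y ∈ t → x ∈ s) (φ : s ≃o s) (e : Equiv.Perm ↥(t \ s))
    (he : ∀ (y : ↥(t \ s)) (x : s), (φ x : α) ⋖ e y ↔ (x : α) ⋖ y) :
    ∃ ψ : t ≃o t, ∀ x : s, (ψ (Set.inclusion hst x) : α) = φ x := by
  classical
  have not_coe_le_coe (y : ↥(t \ s)) (x : s) : ¬ (y : α) ≤ x := fun hyx =>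
    y.2.2 (hyx.eq_or_lt.elim (fun h => h ▸ x.2) fun h => hlt h (hst x.2))
  have le_iff_eq (y y' : ↥(t \ s)) : y ≤ y' ↔ y = y' :=
    ⟨fun hy => hy.eq_of_not_lt fun h => y.2.2 (hlt h y'.2.1), le_of_eq⟩
  have apply_le_apply_iff (x : s) (y : ↥(t \ s)) : (φ x : α) ≤ e y ↔ (x : α) ≤ y := by
    rw [coe_le_coe_iff_exists_covBy hlt, coe_le_coe_iff_exists_covBy hlt]
    refine φ.surjective.exists.trans ?_
    simp only [φ.le_iff_le, he]
  let ι : s ⊕ ↥(t \ s) ≃ t := Equiv.Set.sumDiffSubset hst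
  let ψ : Equiv.Perm t := ι.permCongr (Equiv.sumCongr φ.toEquiv e)
  have hψs (x : s) : ψ (ι (.inl x)) = ι (.inl (φ x)) := by simp [ψ]
  have hψts (y : ↥(t \ s)) : ψ (ι (.inr y)) = ι (.inr (e y)) := by simp [ψ]
  refine ⟨⟨ψ, fun {a b} => ?_⟩, fun x => congrArg Subtype.val (hψs x)⟩
  obtain ⟨a, rfl⟩ := ι.surjective a
  obtain ⟨b, rfl⟩ := ι.surjective b
  rcases a with x | y <;> rcases b with x' | y'
  · rw [hψs, hψs]
    exact φ.le_iff_le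
  · rw [hψs, hψts]
    exact apply_le_apply_iff x y'
  · rw [hψts, hψs]
    exact iff_of_false (not_coe_le_coe _ _) (not_coe_le_coe _ _)
  · rw [hψts, hψts]
    exact (le_iff_eq _ _).trans (e.injective.eq_iff.trans (le_iff_eq y y').symm)

end OrderExtension

namespace FinDigraph

variable {G H K : FinDigraph}

theorem Iso.emb (h : G.Iso H) : G.Emb H :=
  let ⟨e, he⟩ := h
  ⟨e.toEmbedding, he⟩

theorem Emb.trans (hGH : G.Emb H) (hHK : H.Emb K) : G.Emb K :=
  let ⟨f, hf⟩ := hGH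
  let ⟨g, hg⟩ := hHK
  ⟨f.trans g, fun u v => (hg (f u) (f v)).trans (hf u v)⟩

theorem Emb.n_le (h : G.Emb H) : G.n ≤ H.n :=
  let ⟨f, _⟩ := h
  by simpa using Fintype.card_le_of_embedding f

theorem Emb.iso_of_n_le (h : G.Emb H) (hn : H.n ≤ G.n) : G.Iso H := by
  have hcard : Fintype.card (Fin G.n) = Fintype.card (Fin H.n) := by simpa using h.n_le.antisymm hn
  obtain ⟨f, hf⟩ := h
  exact ⟨.ofBijective f ((Fintype.bijective_iff_injective_and_card f).2 ⟨f.injective, hcard⟩), hf⟩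

theorem Emb.exists_emb_emb_of_le (h : G.Emb H) {m : ℕ} (hGm : G.n ≤ m) (hmH : m ≤ H.n) :
    ∃ K : FinDigraph, K.n = m ∧ G.Emb K ∧ K.Emb H := by
  obtain ⟨f, hf⟩ := h
  obtain ⟨S, hfS, -, hS⟩ := Finset.exists_subsuperset_card_eq
    (Finset.univ.map f).subset_univ (by simpa using hGm) (by simpa using hmH)
  let g : Fin m ≃ S := (S.orderIsoOfFin hS).toEquiv
  refine ⟨⟨m, G.pos.trans_le hGm, fun u v => H.adj (g u) (g v)⟩, rfl,
    ⟨⟨fun u => g.symm ⟨f u, hfS (by simp)⟩, fun u v huv => by simpa using huv⟩, fun u v => ?_⟩,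
    ⟨g.toEmbedding.trans (.subtype _), fun _ _ => rfl⟩⟩
  change H.adj (g (g.symm ⟨f u, _⟩)) (g (g.symm ⟨f v, _⟩)) = G.adj u v
  simpa only [Equiv.apply_symm_apply] using hf u v

theorem exists_emb_n_eq_one (H : FinDigraph) : ∃ G : FinDigraph, G.n = 1 ∧ G.Emb H :=
  ⟨⟨1, one_pos, fun _ _ => H.adj ⟨0, H.pos⟩ ⟨0, H.pos⟩⟩, rfl,
    ⟨fun _ => ⟨0, H.pos⟩, Function.injective_of_subsingleton _⟩, fun _ _ => rfl⟩

end FinDigraph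

theorem toD_eq_toD_iff {G H : FinDigraph} : toD G = toD H ↔ G.Iso H := Quotient.eq

theorem toD_surjective : Function.Surjective toD := Quotient.mk_surjective

theorem toD_le_toD_iff {G H : FinDigraph} : toD G ≤ toD H ↔ G.Emb H := by
  constructor
  · rintro ⟨G', H', hG, hH, h⟩
    exact (toD_eq_toD_iff.1 hG).emb.trans (h.trans (toD_eq_toD_iff.1 hH.symm).emb)
  · exact fun h => ⟨G, H, rfl, rfl, h⟩

theorem nVerts_pos (x : D) : 0 < nVerts x := by
  obtain ⟨G, rfl⟩ := toD_surjective x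
  exact G.pos

theorem nVerts_mono {x y : D} (h : x ≤ y) : nVerts x ≤ nVerts y := by
  obtain ⟨G, rfl⟩ := toD_surjective x
  obtain ⟨H, rfl⟩ := toD_surjective y
  exact (toD_le_toD_iff.1 h).n_le

theorem eq_of_le_of_nVerts_le {x y : D} (h : x ≤ y) (hn : nVerts y ≤ nVerts x) : x = y := by
  obtain ⟨G, rfl⟩ := toD_surjective x
  obtain ⟨H, rfl⟩ := toD_surjective y
  exact toD_eq_toD_iff.2 ((toD_le_toD_iff.1 h).iso_of_n_le hn)

instance : PartialOrder D where
  le_refl x := by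
    obtain ⟨G, rfl⟩ := toD_surjective x
    exact toD_le_toD_iff.2 (FinDigraph.iso_refl G).emb
  le_trans x y z hxy hyz := by
    obtain ⟨G, rfl⟩ := toD_surjective x
    obtain ⟨H, rfl⟩ := toD_surjective y
    obtain ⟨K, rfl⟩ := toD_surjective z
    exact toD_le_toD_iff.2 ((toD_le_toD_iff.1 hxy).trans (toD_le_toD_iff.1 hyz))
  le_antisymm _ _ hxy hyx := eq_of_le_of_nVerts_le hxy (nVerts_mono hyx)

theorem nVerts_strictMono : StrictMono nVerts := fun _ _ h =>
  lt_of_not_ge fun hn => h.ne (eq_of_le_of_nVerts_le h.le hn)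

theorem exists_le_nVerts_eq {x y : D} (h : x ≤ y) {m : ℕ} (hxm : nVerts x ≤ m)
    (hmy : m ≤ nVerts y) : ∃ z, nVerts z = m ∧ x ≤ z ∧ z ≤ y := by
  obtain ⟨G, rfl⟩ := toD_surjective x
  obtain ⟨H, rfl⟩ := toD_surjective y
  obtain ⟨K, hK, hGK, hKH⟩ := (toD_le_toD_iff.1 h).exists_emb_emb_of_le hxm hmy
  exact ⟨toD K, hK, toD_le_toD_iff.2 hGK, toD_le_toD_iff.2 hKH⟩

theorem exists_le_nVerts_eq_one (y : D) : ∃ x ≤ y, nVerts x = 1 := by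
  obtain ⟨H, rfl⟩ := toD_surjective y
  obtain ⟨G, hG, h⟩ := H.exists_emb_n_eq_one
  exact ⟨toD G, toD_le_toD_iff.2 h, hG⟩

theorem covBy_iff_le_and_nVerts {x y : D} : x ⋖ y ↔ x ≤ y ∧ nVerts x + 1 = nVerts y := by
  constructor
  · intro h
    have hlt := nVerts_strictMono h.lt
    obtain ⟨z, hz, hxz, hzy⟩ := exists_le_nVerts_eq h.le (Nat.le_succ _) hlt
    refine ⟨h.le, ?_⟩
    rcases h.eq_or_eq hxz hzy with rfl | rfl
    · omega
    · exact hz.symm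
  · rintro ⟨hle, hn⟩
    refine ⟨hle.lt_of_ne (by rintro rfl; omega), fun z hxz hzy => ?_⟩
    have := nVerts_strictMono hxz
    have := nVerts_strictMono hzy
    omega

instance : IsStronglyCoatomic D where
  exists_le_covBy_of_lt x y h := by
    have hlt := nVerts_strictMono h
    obtain ⟨z, hz, hxz, hzy⟩ :=
      exists_le_nVerts_eq h.le (Nat.le_sub_one_of_lt hlt) (Nat.sub_le _ 1)
    exact ⟨z, hxz, covBy_iff_le_and_nVerts.2 ⟨hzy, by omega⟩⟩

theorem mem_lcov_iff {x y : D} : x ∈ lcov y ↔ x ⋖ y := by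
  simp only [lcov, Set.mem_ofPred_eq, covBy_iff_lt_and_eq_or_eq, lt_iff_le_and_ne, and_assoc]

theorem lcov_eq_empty_iff {x : D} : lcov x = ∅ ↔ nVerts x = 1 := by
  rw [Set.eq_empty_iff_forall_notMem]
  constructor
  · intro h
    obtain ⟨y, hyx, hy⟩ := exists_le_nVerts_eq_one x
    rcases hyx.eq_or_lt with rfl | hlt
    · exact hy
    · obtain ⟨z, -, hz⟩ := exists_le_covBy_of_lt hlt
      exact absurd (mem_lcov_iff.2 hz) (h z)
  · intro hx y hy
    have := nVerts_strictMono (mem_lcov_iff.1 hy).lt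
    have := nVerts_pos y
    omega

theorem nVerts_eq_of_lcov_eq {x y : D} (h : lcov x = lcov y) : nVerts x = nVerts y := by
  rcases (lcov x).eq_empty_or_nonempty with hx | ⟨z, hzx⟩
  · rw [lcov_eq_empty_iff.1 hx, lcov_eq_empty_iff.1 (h ▸ hx)]
  · have hzy : z ∈ lcov y := h ▸ hzx
    rw [mem_lcov_iff, covBy_iff_le_and_nVerts] at hzx hzy
    rw [← hzx.2, hzy.2]

theorem finite_Dn (n : ℕ) : (Dn n).Finite := by
  refine (Set.finite_range fun a : Σ m : Fin n, Fin (m + 1) → Fin (m + 1) → Bool =>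
    toD ⟨a.1 + 1, Nat.succ_pos _, a.2⟩).subset fun x hx => ?_
  obtain ⟨⟨_ | m, hpos, adj⟩, rfl⟩ := toD_surjective x
  · exact absurd hpos (lt_irrefl 0)
  · exact ⟨⟨⟨m, hx⟩, adj⟩, rfl⟩

theorem Dn_subset_succ (n : ℕ) : Dn n ⊆ Dn (n + 1) := fun _ => mem_Dn_succ

theorem isLowerSet_Dn (n : ℕ) : IsLowerSet (Dn n) := fun _ _ hyx hx => (nVerts_mono hyx).trans hx

theorem mem_Dn_of_lt {n : ℕ} {x y : D} (hxy : x < y) (hy : y ∈ Dn (n + 1)) : x ∈ Dn n :=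
  Nat.le_of_lt_succ ((nVerts_strictMono hxy).trans_le hy)

theorem mem_Dn_succ_sdiff_iff {n : ℕ} {x : D} :
    x ∈ Dn (n + 1) \ Dn n ↔ nVerts x = n + 1 := by
  simp only [Dn, Set.mem_sdiff, Set.mem_ofPred_eq]
  omega

theorem lcov_subset_Dn {n : ℕ} {x : D} (hx : x ∈ Dn (n + 1)) : lcov x ⊆ Dn n :=
  fun _ hy => mem_Dn_of_lt (mem_lcov_iff.1 hy).lt hx

theorem Hset_succ_eq_fiberProfile (n : ℕ) :
    Hset (n + 1) = fiberProfile fun x : ↥(Dn (n + 1) \ Dn n) => lcov x := by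
  have hcount (x : ↥(Dn (n + 1) \ Dn n)) :
      scount x = Nat.card {y : ↥(Dn (n + 1) \ Dn n) // lcov y = lcov x} := by
    refine (Nat.card_congr (Equiv.subtypeSubtypeEquivSubtype fun h => ?_)).symm
    rw [mem_Dn_succ_sdiff_iff, nVerts_eq_of_lcov_eq h, ← mem_Dn_succ_sdiff_iff]
    exact x.2
  ext p
  constructor
  · rintro ⟨x, hx, rfl⟩
    have hx : x ∈ Dn (n + 1) \ Dn n := mem_Dn_succ_sdiff_iff.2 hx
    exact ⟨⟨x, hx⟩, congrArg (lcov x, ·) (hcount ⟨x, hx⟩).symm⟩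
  · rintro ⟨x, rfl⟩
    exact ⟨x, mem_Dn_succ_sdiff_iff.1 x.2, congrArg (lcov x, ·) (hcount x).symm⟩

section SetImage

variable {n : ℕ} {φ : ↥(Dn n) → ↥(Dn n)} {S T : Set D}

theorem apply_mem_setImage_iff (hφ : Function.Injective φ) (x : Dn n) :
    (φ x : D) ∈ setImage φ S ↔ (x : D) ∈ S := by
  constructor
  · rintro ⟨y, hy, hyS, hxy⟩
    exact hφ (Subtype.ext hxy) ▸ hyS
  · exact fun hx => ⟨x, x.2, hx, rfl⟩

theorem injOn_setImage (hφ : Function.Injective φ) : Set.InjOn (setImage φ) (Set.Iic (Dn n)) := by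
  intro S hS T hT h
  have hmem (x : Dn n) : (x : D) ∈ S ↔ (x : D) ∈ T := by
    rw [← apply_mem_setImage_iff hφ, h, apply_mem_setImage_iff hφ]
  exact Set.ext fun x => ⟨fun hx => (hmem ⟨x, hS hx⟩).1 hx, fun hx => (hmem ⟨x, hT hx⟩).2 hx⟩

theorem eq_setImage_iff (hφ : Function.Bijective φ) (hT : T ⊆ Dn n) :
    T = setImage φ S ↔ ∀ x : Dn n, (φ x : D) ∈ T ↔ (x : D) ∈ S := by
  constructor
  · rintro rfl
    exact apply_mem_setImage_iff hφ.1
  · refine fun h => Set.Subset.antisymm (fun z hz => ?_) ?_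
    · obtain ⟨x, hx⟩ := hφ.2 ⟨z, hT hz⟩
      obtain rfl : (φ x : D) = z := congrArg Subtype.val hx
      exact ⟨x, x.2, (h x).1 hz, rfl⟩
    · rintro _ ⟨x, hx, hxS, rfl⟩
      exact (h ⟨x, hx⟩).2 hxS

theorem lcov_eq_setImage_iff (hφ : Function.Bijective φ) {x y : D} (hy : y ∈ Dn (n + 1)) :
    lcov y = setImage φ (lcov x) ↔ ∀ z : Dn n, (φ z : D) ⋖ y ↔ (z : D) ⋖ x := by
  simp only [eq_setImage_iff hφ (lcov_subset_Dn hy), mem_lcov_iff]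

theorem HsetImage_eq_image (A : Set (Set D × ℕ)) :
    HsetImage φ A = Prod.map (setImage φ) id '' A := by
  ext p
  simp [HsetImage, Prod.map, eq_comm]

end SetImage

/-- Extension Lemma, extendibility criterion: an order automorphism `φ`
of `D_n` extends to an order automorphism of `D_{n+1}` iff `φ(H_{n+1}) = H_{n+1}`. -/
theorem extension_lemma_extendibility (n : ℕ) (hn : 1 ≤ n)
    (φ : ↥(Dn n) → ↥(Dn n)) (hφ : IsOrderAuto φ) :
    (∃ ψ : ↥(Dn (n + 1)) → ↥(Dn (n + 1)), IsOrderAuto ψ ∧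
        ∀ (x : D) (hx : x ∈ Dn n), (↑(ψ ⟨x, mem_Dn_succ hx⟩) : D) = ↑(φ ⟨x, hx⟩)) ↔
      HsetImage φ (Hset (n + 1)) = Hset (n + 1) := by
  obtain ⟨φ, rfl⟩ := isOrderAuto_iff_exists_orderIso.1 hφ
  have hinj : Set.InjOn (setImage φ) (Set.range fun x : ↥(Dn (n + 1) \ Dn n) => lcov x) :=
    (injOn_setImage φ.injective).mono (Set.range_subset_iff.2 fun x => lcov_subset_Dn x.2.1)
  have : Finite ↥(Dn (n + 1) \ Dn n) := (finite_Dn (n + 1)).sdiff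
  rw [HsetImage_eq_image, Hset_succ_eq_fiberProfile, ← fiberProfile_comp hinj,
    ← exists_equiv_comp_eq_iff]
  constructor
  · rintro ⟨ψ, hψ, hφψ⟩
    obtain ⟨ψ, rfl⟩ := isOrderAuto_iff_exists_orderIso.1 hψ
    obtain ⟨e, he⟩ := exists_perm_sdiff_covBy_iff (Dn_subset_succ n)
      (isLowerSet_Dn (n + 1)).ordConnected φ.surjective ψ fun x => hφψ x x.2
    exact ⟨e, fun y => (lcov_eq_setImage_iff φ.bijective (e y).2.1).2 (he y)⟩
  · rintro ⟨e, he⟩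
    obtain ⟨ψ, hψ⟩ := exists_orderIso_extension_of_covBy_iff (Dn_subset_succ n)
      (fun _ _ => mem_Dn_of_lt) φ e fun y => (lcov_eq_setImage_iff φ.bijective (e y).2.1).1 (he y)
    exact ⟨ψ, isOrderAuto_iff_exists_orderIso.2 ⟨ψ, rfl⟩, fun x hx => hψ ⟨x, hx⟩⟩
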